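/- arXiv:2203.15133 — 4 statements merged into one kernel-verified Lean document; each statement's English description precedes it below -/
import Mathlib

section
/- Let A be a henselian local ring with maximal ideal m and let f ∈ A[X] be monic. If the reduction of f modulo m factors as a product f̄ = g₀·h₀ of two coprime monic polynomials over the residue field, then f factors as f = g·h with g, h ∈ A[X] monic, g reducing to g₀ and h reducing to h₀ modulo m. -/
/-!
The coprime monic factorizations of `f` with prescribed degrees are the points of an étale
`A`-algebra, so it suffices to lift points of étale `A`-algebras from a quotient of `A` to `A`.
Around a point with values in a local ring, an étale algebra is standard étale, and a point of a
standard étale algebra is a simple root of a monic polynomial, which the henselian property lifts.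
When the quotient is not the residue field, that property only lifts the root modulo the maximal
ideal; the lift is still exact because simple roots in a local ring are determined by their
residues.
-/

open IsLocalRing Polynomial

section HenselianLift

variable {A B S : Type*} [CommRing A] [HenselianLocalRing A] [CommRing B] [IsLocalRing B]
  [Algebra A B] [CommRing S] [Algebra A S]

theorem exists_isRoot_algebraMap_eq_of_simple_root
    (hAB : Function.Surjective (algebraMap A B)) {f : A[X]} (hf : f.Monic) {x : B}
    (hx : aeval x f = 0) (hx' : IsUnit (aeval x (derivative f))) :
    ∃ a : A, f.IsRoot a ∧ algebraMap A B a = x := by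
  have : IsLocalHom (algebraMap A B) := hAB.isLocalHom
  obtain ⟨a₀, rfl⟩ := hAB x
  simp only [aeval_algebraMap_apply_eq_algebraMap_eval] at hx hx'
  have eval_mem : f.eval a₀ ∈ maximalIdeal A := fun h ↦
    not_isUnit_zero (hx ▸ h.map (algebraMap A B))
  obtain ⟨a, ha, haa₀⟩ :=
    HenselianLocalRing.is_henselian f hf a₀ eval_mem (isUnit_of_map_unit _ _ hx')
  have sub_not_unit : ¬ IsUnit (algebraMap A B a₀ - algebraMap A B a) := by
    rw [← neg_sub, IsUnit.neg_iff, ← map_sub]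
    exact fun h ↦ haa₀ (isUnit_of_map_unit _ _ h)
  refine ⟨a, ha, (eq_of_eval_eq_zero_of_not_isUnit_sub (f := f.map (algebraMap A B))
    ?_ ?_ sub_not_unit ?_).symm⟩
  · rwa [eval_map_algebraMap, aeval_algebraMap_apply_eq_algebraMap_eval]
  · rw [eval_map_algebraMap, aeval_algebraMap_apply_eq_algebraMap_eval, ha, map_zero]
  · rwa [derivative_map, eval_map_algebraMap, aeval_algebraMap_apply_eq_algebraMap_eval]

theorem exists_hasMap_algebraMap_eq_of_hasMap
    (hAB : Function.Surjective (algebraMap A B)) (P : StandardEtalePair A) {x : B}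
    (hx : P.HasMap x) : ∃ a : A, P.HasMap a ∧ algebraMap A B a = x := by
  have : IsLocalHom (algebraMap A B) := hAB.isLocalHom
  obtain ⟨a, ha, rfl⟩ :=
    exists_isRoot_algebraMap_eq_of_simple_root hAB P.monic_f hx.1 hx.isUnit_derivative_f
  refine ⟨a, ⟨ha, isUnit_of_map_unit (algebraMap A B) _ ?_⟩, rfl⟩
  rw [← aeval_algebraMap_apply]
  exact hx.2

theorem exists_ofId_comp_eq_of_isStandardEtale [Algebra.IsStandardEtale A S]
    (hAB : Function.Surjective (algebraMap A B)) (φ : S →ₐ[A] B) :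
    ∃ ψ : S →ₐ[A] A, (Algebra.ofId A B).comp ψ = φ := by
  obtain ⟨P⟩ := Algebra.IsStandardEtale.nonempty_standardEtalePresentation (R := A) (S := S)
  obtain ⟨a, ha, hax⟩ :=
    exists_hasMap_algebraMap_eq_of_hasMap hAB P.P (P.hasMap.map φ)
  refine ⟨(P.P.lift a ha).comp P.equivRing, P.hom_ext ?_⟩
  simpa using hax

theorem exists_ofId_comp_eq_of_isEtaleAt [Algebra.FinitePresentation A S]
    (hAB : Function.Surjective (algebraMap A B)) (φ : S →ₐ[A] B)
    [Algebra.IsEtaleAt A ((maximalIdeal B).comap φ)] :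
    ∃ ψ : S →ₐ[A] A, (Algebra.ofId A B).comp ψ = φ := by
  obtain ⟨s, hs, _⟩ :=
    Algebra.IsEtaleAt.exists_isStandardEtale (R := A) ((maximalIdeal B).comap φ)
  have hφs : IsUnit (φ s) := notMem_maximalIdeal.mp hs
  obtain ⟨ψ, hψ⟩ := exists_ofId_comp_eq_of_isStandardEtale hAB
    (IsLocalization.Away.liftAlgHom (S := Localization.Away s) (f := φ) s hφs)
  refine ⟨ψ.comp (IsScalarTower.toAlgHom A S _), ?_⟩
  rw [← AlgHom.comp_assoc, hψ]
  ext x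
  simp

end HenselianLift

open UniversalCoprimeFactorizationRing in
theorem stmt_1_general {A B : Type*} [CommRing A] [HenselianLocalRing A] [CommRing B]
    [Nontrivial B] [Algebra A B] (hAB : Function.Surjective (algebraMap A B))
    {f : A[X]} (hf : f.Monic) {g₀ h₀ : B[X]} (hg₀ : g₀.Monic) (hh₀ : h₀.Monic)
    (hcop : IsCoprime g₀ h₀) (hfac : f.map (algebraMap A B) = g₀ * h₀) :
    ∃ g h : A[X], g.Monic ∧ h.Monic ∧ IsCoprime g h ∧ f = g * h ∧
      g.map (algebraMap A B) = g₀ ∧ h.map (algebraMap A B) = h₀ := by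
  have : IsLocalRing B := .of_surjective' _ hAB
  have hdeg : f.natDegree = g₀.natDegree + h₀.natDegree := by
    rw [← hg₀.natDegree_mul hh₀, ← hfac, hf.natDegree_map]
  let p := MonicDegreeEq.mk f hf rfl
  let φ := (homEquiv B _ _ hdeg p).symm ⟨(.mk g₀ hg₀ rfl, .mk h₀ hh₀ rfl), hfac.symm, hcop⟩
  obtain ⟨ψ, hψ⟩ := exists_ofId_comp_eq_of_isEtaleAt hAB φ
  let q := homEquiv A _ _ hdeg p ψ
  have map_fst : q.1.1.map (Algebra.ofId A B) = .mk g₀ hg₀ rfl := by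
    rw [← homEquiv_comp_fst, hψ, Equiv.apply_symm_apply]
  have map_snd : q.1.2.map (Algebra.ofId A B) = .mk h₀ hh₀ rfl := by
    rw [← homEquiv_comp_snd, hψ, Equiv.apply_symm_apply]
  have mul_eq : q.1.1.1 * q.1.2.1 = f := by simpa [p] using q.2.1
  exact ⟨q.1.1.1, q.1.2.1, q.1.1.monic, q.1.2.monic, q.2.2, mul_eq.symm,
    congr(($map_fst).1), congr(($map_snd).1)⟩

/-- Hensel's lemma for factorizations: over a henselian local ring, a coprime monic
factorization of the reduction of a monic polynomial lifts. -/
theorem stmt_1 {A : Type*} [CommRing A] [HenselianLocalRing A]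
    (f : Polynomial A) (hf : f.Monic)
    (g₀ h₀ : Polynomial (IsLocalRing.ResidueField A))
    (hg₀ : g₀.Monic) (hh₀ : h₀.Monic) (hcop : IsCoprime g₀ h₀)
    (hfac : f.map (IsLocalRing.residue A) = g₀ * h₀) :
    ∃ g h : Polynomial A, g.Monic ∧ h.Monic ∧ f = g * h ∧
      g.map (IsLocalRing.residue A) = g₀ ∧ h.map (IsLocalRing.residue A) = h₀ := by
  obtain ⟨g, h, hg, hh, -, hfgh⟩ := stmt_1_general residue_surjective hf hg₀ hh₀ hcop hfac
  exact ⟨g, h, hg, hh, hfgh⟩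
end

section
/- Let A be a local ring with maximal ideal m, let p₁, …, p_r ∈ A[X] be monic polynomials that are pairwise coprime modulo m and each have unit constant term, and let b₁, …, b_r ∈ A be units. Then there exists a polynomial p ∈ A[X] with constant term 0 such that p ≡ bᵢ (mod pᵢ) for every i. -/
/-!
The resultant of a monic `f` with `g` is a unit exactly when `f` and `g` are coprime. Resultants
commute with ring homomorphisms and a local homomorphism reflects units, so coprimality lifts from
the residue field to `A`. A unit constant term makes `pᵢ` coprime to `X`, so the condition on the
constant term of `q` is one more congruence, modulo `X`, for the Chinese remainder theorem.
-/

open Function Polynomial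

section Coprime

variable {A : Type*} [CommRing A]

lemma isUnit_resultant_natDegree_add_iff_isCoprime {f g : A[X]} (hf : f.Monic) (k : ℕ) :
    IsUnit (resultant f g f.natDegree (g.natDegree + k)) ↔ IsCoprime f g := by
  rw [resultant_add_right_deg f g _ _ k le_rfl, hf.coeff_natDegree, one_pow, one_mul,
    isUnit_resultant_iff_isCoprime hf]

lemma isCoprime_map_iff_of_monic {B : Type*} [CommRing B] (φ : A →+* B) [IsLocalHom φ]
    {f g : A[X]} (hf : f.Monic) : IsCoprime (f.map φ) (g.map φ) ↔ IsCoprime f g := by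
  rcases subsingleton_or_nontrivial B with _ | _
  · have hzero : IsUnit (0 : A) := isUnit_of_map_unit φ 0 (isUnit_of_subsingleton _)
    have : Subsingleton A := subsingleton_of_zero_eq_one (isUnit_zero_iff.mp hzero)
    exact iff_of_true ⟨0, 0, Subsingleton.elim _ _⟩ ⟨0, 0, Subsingleton.elim _ _⟩
  -- The degree of `g` may drop under `φ`, so both resultants are taken at the degree of `g`.
  obtain ⟨k, hk⟩ := Nat.exists_eq_add_of_le (natDegree_map_le (f := φ) (p := g))
  rw [← isUnit_resultant_natDegree_add_iff_isCoprime (hf.map φ) k, hf.natDegree_map, ← hk,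
    resultant_map_map, isUnit_map_iff, isUnit_resultant_iff_isCoprime hf]

lemma isCoprime_X_iff_isUnit_coeff_zero {f : A[X]} : IsCoprime X f ↔ IsUnit (f.coeff 0) := by
  rcases subsingleton_or_nontrivial A with _ | _
  · exact iff_of_true ⟨0, 0, Subsingleton.elim _ _⟩ (isUnit_of_subsingleton _)
  rw [← isUnit_resultant_iff_isCoprime monic_X, natDegree_X, ← sub_zero X, ← C_0,
    resultant_X_sub_C_left f _ 0 le_rfl, coeff_zero_eq_eval_zero]

end Coprime

lemma exists_forall_dvd_sub_of_pairwise_isCoprime {R ι : Type*} [CommRing R] [Finite ι]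
    {p : ι → R} (hp : Pairwise (IsCoprime on p)) (b : ι → R) : ∃ q, ∀ i, p i ∣ q - b i := by
  simp only [← Ideal.mem_span_singleton]
  exact Ideal.exists_forall_sub_mem_ideal
    (fun i j hij => (Ideal.isCoprime_span_singleton_iff _ _).mpr (hp hij)) b

lemma exists_coeff_zero_eq_and_forall_dvd_sub {A ι : Type*} [CommRing A] [Finite ι]
    {p : ι → A[X]} (hp : Pairwise (IsCoprime on p)) (hconst : ∀ i, IsUnit ((p i).coeff 0))
    (a : A) (b : ι → A[X]) : ∃ q : A[X], q.coeff 0 = a ∧ ∀ i, p i ∣ q - b i := by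
  have hX (i : ι) : IsCoprime X (p i) := isCoprime_X_iff_isUnit_coeff_zero.mpr (hconst i)
  have hXp : Pairwise (IsCoprime on fun o : Option ι => o.elim X p) := by
    rintro (_ | i) (_ | j) hij
    · exact absurd rfl hij
    · exact hX j
    · exact (hX i).symm
    · exact hp (ne_of_apply_ne some hij)
  obtain ⟨q, hq⟩ := exists_forall_dvd_sub_of_pairwise_isCoprime hXp fun o => o.elim (C a) b
  have hqX : (q - C a).coeff 0 = 0 := X_dvd_iff.mp (hq none)
  rw [coeff_sub, coeff_C_zero, sub_eq_zero] at hqX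
  exact ⟨q, hqX, fun i => hq (some i)⟩

theorem stmt_5_general {A B ι : Type*} [CommRing A] [CommRing B] [Finite ι]
    (φ : A →+* B) [IsLocalHom φ] {p : ι → A[X]} (hmonic : ∀ i, (p i).Monic)
    (hcop : Pairwise (IsCoprime on fun i => (p i).map φ))
    (hconst : ∀ i, IsUnit ((p i).coeff 0)) (a : A) (b : ι → A[X]) :
    ∃ q : A[X], q.coeff 0 = a ∧ ∀ i, p i ∣ q - b i :=
  exists_coeff_zero_eq_and_forall_dvd_sub
    (fun i _ hij => (isCoprime_map_iff_of_monic φ (hmonic i)).mp (hcop hij)) hconst a b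

/-- Given monic polynomials `pᵢ` over a local ring, pairwise coprime modulo the maximal
ideal, each with unit constant term, and units `bᵢ`, there is a polynomial `q` with zero
constant term such that `q ≡ bᵢ (mod pᵢ)` for all `i`. -/
theorem stmt_5 {A : Type*} [CommRing A] [IsLocalRing A] {r : ℕ}
    (p : Fin r → Polynomial A) (hmonic : ∀ i, (p i).Monic)
    (hcop : ∀ i j, i ≠ j →
      IsCoprime ((p i).map (IsLocalRing.residue A)) ((p j).map (IsLocalRing.residue A)))
    (hconst : ∀ i, IsUnit ((p i).coeff 0))
    (b : Fin r → A) (hb : ∀ i, IsUnit (b i)) :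
    ∃ q : Polynomial A, q.coeff 0 = 0 ∧ ∀ i, p i ∣ (q - Polynomial.C (b i)) :=
  stmt_5_general (IsLocalRing.residue A) hmonic (fun i j => hcop i j) hconst 0
    fun i => Polynomial.C (b i)
end

section
/- Let (R, m_R) → (S, m_S) be a local homomorphism of noetherian local rings with R regular and S Cohen–Macaulay. If dim S = dim R + dim(S/m_R S), then S is flat over R. -/
/-- A noetherian local ring is regular if its maximal ideal can be generated by
`dim R` elements. -/
def IsRegularLocalRing' (R : Type*) [CommRing R] [IsLocalRing R] : Prop :=
  IsNoetherianRing R ∧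
    ∃ s : Finset R, Ideal.span (s : Set R) = IsLocalRing.maximalIdeal R ∧
      (s.card : WithBot (WithTop ℕ)) = ringKrullDim R

/-- A noetherian local ring is Cohen–Macaulay if there is a regular sequence of length
`dim S` contained in the maximal ideal. -/
def IsCohenMacaulayLocalRing' (S : Type*) [CommRing S] [IsLocalRing S] : Prop :=
  IsNoetherianRing S ∧
    ∃ rs : List S, (∀ r ∈ rs, r ∈ IsLocalRing.maximalIdeal S) ∧
      RingTheory.Sequence.IsRegular S rs ∧
      (rs.length : WithBot (WithTop ℕ)) = ringKrullDim S

open Module RingTheory.Sequence IsLocalRing TensorProduct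
open CategoryTheory CategoryTheory.Limits CategoryTheory.Abelian
open scoped Pointwise

/-!
Let `M` be a finite `S`-module that is Cohen–Macaulay and put `d = dim R`. A minimal set of
generators of `m_R` consists of `d` elements, and killing them lowers `dim M` by `d`, so their
images in `S` form an `M`-regular sequence: a nonzero submodule of `M` has dimension at least
`depth M`, so the torsion of a zero divisor `x`, which is a module over `S / x`, would force
`dim M / x M ≥ depth M`; by Rees' theorem `depth M / x M ≥ depth M - 1`, and the argument repeats.

Regularity of the generators makes `M ⊗ m_R → M` injective, and it remains to see that this implies
flatness. Let `K_I` be the kernel of `M ⊗ I → M` and let `a ∈ m_R` lie outside `I`. If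
`K_(I + (a)) = 0`, then multiplication by `a` maps `K_(I : a)` onto `K_I`. By noetherian induction
`K_(I : a) = 0`, unless `I : a = I`, in which case `K_I = a K_I` and Nakayama's lemma applies.
-/

universe u v

section LocalCriterion

variable {R M : Type*} [CommRing R] [AddCommGroup M] [Module R M]

/-- The inclusion `a (I : a) ⊆ I`, viewed as the linear map `c ↦ a c`; it compares
`M ⊗ (I : a)` with `M ⊗ I`. -/
def colonMul (I : Ideal R) (a : R) : ↥(I.colon {a}) →ₗ[R] I :=
  (LinearMap.lsmul R R a).restrict fun _ hc ↦ by
    simpa [mul_comm] using Submodule.mem_colon_singleton.mp hc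

/-- The map `R → I + (a)`, `r ↦ r a`, the second component of the presentation of `I + (a)`. -/
def mulToSupSpan (I : Ideal R) (a : R) : R →ₗ[R] ↥(I ⊔ Ideal.span {a}) :=
  LinearMap.toSpanSingleton R _ ⟨a, Ideal.mem_sup_right (Ideal.mem_span_singleton_self a)⟩

/-- The presentation `I × R → I + (a)`, `(i, r) ↦ i + r a`, which computes `M ⊗ (I + (a))`. -/
def prodToSupSpan (I : Ideal R) (a : R) : I × R →ₗ[R] ↥(I ⊔ Ideal.span {a}) :=
  (Submodule.inclusion le_sup_left).coprod (mulToSupSpan I a)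

lemma prodToSupSpan_surjective (I : Ideal R) (a : R) :
    Function.Surjective (prodToSupSpan I a) := by
  rintro ⟨z, hz⟩
  obtain ⟨i, hi, y, hy, rfl⟩ := Submodule.mem_sup.mp hz
  obtain ⟨r, rfl⟩ := Ideal.mem_span_singleton'.mp hy
  exact ⟨(⟨i, hi⟩, r), Subtype.ext rfl⟩

lemma exact_colonMul_prod_neg_prodToSupSpan (I : Ideal R) (a : R) :
    Function.Exact ((colonMul I a).prod (-(I.colon {a}).subtype)) (prodToSupSpan I a) := by
  rintro ⟨⟨i, hi⟩, r⟩
  have hzero_iff : prodToSupSpan I a (⟨i, hi⟩, r) = 0 ↔ i + r * a = 0 := Subtype.ext_iff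
  rw [hzero_iff]
  constructor
  · intro h
    have hr : -r ∈ I.colon {a} := Submodule.mem_colon_singleton.mpr <| by
      rwa [smul_eq_mul, neg_mul, ← eq_neg_of_add_eq_zero_left h]
    refine ⟨⟨-r, hr⟩, Prod.ext (Subtype.ext ?_) (neg_neg r)⟩
    change a * -r = i
    linear_combination -h
  · rintro ⟨c, hc⟩
    obtain ⟨hi, hr⟩ := Prod.ext_iff.mp hc
    have hi : a * c = i := congrArg Subtype.val hi
    have hr : -(c : R) = r := hr
    linear_combination -hi - a * hr

lemma exists_lTensor_colonMul_eq {I : Ideal R} {a : R}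
    (hinj : Function.Injective ((I ⊔ Ideal.span {a}).subtype.lTensor M))
    {u : M ⊗[R] I} (hu : I.subtype.lTensor M u = 0) :
    ∃ v : M ⊗[R] ↥(I.colon {a}),
      (colonMul I a).lTensor M v = u ∧ (I.colon {a}).subtype.lTensor M v = 0 := by
  -- `(u, 0)` dies in `M ⊗ (I + (a))`, so it comes from the relations `(a c, -c)`, `c ∈ (I : a)`.
  have hzero : (prodToSupSpan I a).lTensor M ((LinearMap.inl R I R).lTensor M u) = 0 := by
    apply hinj
    rw [map_zero, ← LinearMap.lTensor_comp_apply, ← LinearMap.lTensor_comp_apply, ← hu]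
    congr 2
    ext
    simp [prodToSupSpan]
  obtain ⟨v, hv⟩ := (lTensor_exact M (exact_colonMul_prod_neg_prodToSupSpan I a)
    (prodToSupSpan_surjective I a) _).mp hzero
  have hfst := congrArg ((LinearMap.fst R I R).lTensor M) hv
  have hsnd := congrArg ((LinearMap.snd R I R).lTensor M) hv
  simp only [← LinearMap.lTensor_comp_apply, LinearMap.fst_prod, LinearMap.snd_prod,
    LinearMap.fst_comp_inl, LinearMap.snd_comp_inl, LinearMap.lTensor_id, LinearMap.id_apply,
    LinearMap.lTensor_neg, LinearMap.neg_apply, LinearMap.lTensor_zero, LinearMap.zero_apply,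
    neg_eq_zero] at hfst hsnd
  exact ⟨v, hfst, hsnd⟩

lemma lTensor_subtype_injective_of_sup_of_colon {I : Ideal R} {a : R}
    (hsup : Function.Injective ((I ⊔ Ideal.span {a}).subtype.lTensor M))
    (hcolon : Function.Injective ((I.colon {a}).subtype.lTensor M)) :
    Function.Injective (I.subtype.lTensor M) := by
  refine (injective_iff_map_eq_zero _).mpr fun u hu ↦ ?_
  obtain ⟨v, rfl, hv⟩ := exists_lTensor_colonMul_eq hsup hu
  rw [(injective_iff_map_eq_zero _).mp hcolon v hv, map_zero]

lemma exists_eq_smul_of_colon_eq {I : Ideal R} {a : R} (hcolon : I.colon {a} = I)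
    (hsup : Function.Injective ((I ⊔ Ideal.span {a}).subtype.lTensor M))
    {u : M ⊗[R] I} (hu : I.subtype.lTensor M u = 0) :
    ∃ v : M ⊗[R] I, u = a • v ∧ I.subtype.lTensor M v = 0 := by
  obtain ⟨v, rfl, hv⟩ := exists_lTensor_colonMul_eq hsup hu
  let e : ↥(I.colon {a}) →ₗ[R] I := Submodule.inclusion hcolon.le
  refine ⟨e.lTensor M v, ?_, ?_⟩
  · rw [← LinearMap.smul_apply, ← LinearMap.lTensor_smul]
    rfl
  · rwa [← LinearMap.lTensor_comp_apply]

variable {S : Type*} [CommRing S] [Algebra R S] [Module S M] [IsScalarTower R S M]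
  [IsNoetherianRing R] [IsNoetherianRing S] [Module.Finite S M]

lemma lTensor_subtype_injective_of_colon_eq
    {I : Ideal R} {a : R} (ha : algebraMap R S a ∈ Ring.jacobson S) (hcolon : I.colon {a} = I)
    (hsup : Function.Injective ((I ⊔ Ideal.span {a}).subtype.lTensor M)) :
    Function.Injective (I.subtype.lTensor M) := by
  have : Module.Finite S (M ⊗[R] I) := .equiv (AlgebraTensorModule.cancelBaseChange R S S M I)
  let K := LinearMap.ker (AlgebraTensorModule.lTensor S M I.subtype)
  have hK : K ≤ Ring.jacobson S • K := fun u hu ↦ by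
    obtain ⟨v, rfl, hv⟩ := exists_eq_smul_of_colon_eq hcolon hsup hu
    rw [← algebraMap_smul S a v]
    exact Submodule.smul_mem_smul ha hv
  have hbot : K = ⊥ := Submodule.eq_bot_of_le_smul_of_le_jacobson_bot _ K
    (IsNoetherian.noetherian K) hK Ideal.jacobson_bot.ge
  exact (LinearMap.ker_eq_bot (f := AlgebraTensorModule.lTensor S M I.subtype)).mp hbot

lemma flat_of_forall_ge_lTensor_subtype_injective {J : Ideal R}
    (hJ : J.map (algebraMap R S) ≤ Ring.jacobson S)
    (hinj : ∀ I ≥ J, Function.Injective (I.subtype.lTensor M)) : Module.Flat R M := by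
  refine Module.Flat.iff_lTensor_injective'.mpr fun I ↦ ?_
  induction I using WellFoundedGT.induction with | _ I ih
  by_cases hJI : J ≤ I
  · exact hinj I hJI
  obtain ⟨a, haJ, haI⟩ := SetLike.not_le_iff_exists.mp hJI
  have hsup := ih (I ⊔ Ideal.span {a}) <| by
    simpa [left_lt_sup] using haI
  obtain hcolon | hcolon := (show I ≤ I.colon {a} from Ideal.le_colon).eq_or_lt
  · exact lTensor_subtype_injective_of_colon_eq (hJ (Ideal.mem_map_of_mem _ haJ)) hcolon.symm hsup
  · exact lTensor_subtype_injective_of_sup_of_colon hsup (ih _ hcolon)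

theorem flat_of_lTensor_maximal_subtype_injective {m : Ideal R} [m.IsMaximal]
    (hm : m.map (algebraMap R S) ≤ Ring.jacobson S)
    (hinj : Function.Injective (m.subtype.lTensor M)) : Module.Flat R M := by
  refine flat_of_forall_ge_lTensor_subtype_injective hm fun I hI ↦ ?_
  obtain rfl | rfl := (Ideal.IsMaximal.out (I := m)).le_iff.mp hI |>.symm
  · exact hinj
  · exact (LinearEquiv.lTensor M Submodule.topEquiv).injective

end LocalCriterion

section RegularSequence

variable {R M : Type*} [CommRing R] [AddCommGroup M] [Module R M]

lemma exists_lTensor_subtype_eq_of_isSMulRegular {I : Ideal R} {x : R}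
    (hx : IsSMulRegular (M ⧸ (I • ⊤ : Submodule R M)) x) {u : M ⊗[R] I} {w : M ⊗[R] R}
    (h : I.subtype.lTensor M u + x • w = 0) : ∃ z, I.subtype.lTensor M z = w := by
  have hexact := lTensor_exact M (LinearMap.exact_subtype_mkQ I) (Submodule.mkQ_surjective I)
  have hx' : IsSMulRegular (M ⊗[R] (R ⧸ I)) x :=
    ((tensorQuotEquivQuotSMul M I).isSMulRegular_congr x).mpr hx
  refine (hexact w).mp (hx'.right_eq_zero_of_smul ?_)
  rw [← map_smul, eq_neg_of_add_eq_zero_right h, map_neg, hexact.apply_apply_eq_zero, neg_zero]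

lemma exists_eq_lTensor_inclusion_add_lTensor_mulToSupSpan {I : Ideal R} {x : R}
    (u : M ⊗[R] ↥(I ⊔ Ideal.span {x})) :
    ∃ (v : M ⊗[R] I) (w : M ⊗[R] R),
      u = (Submodule.inclusion le_sup_left).lTensor M v + (mulToSupSpan I x).lTensor M w := by
  obtain ⟨t, rfl⟩ := LinearMap.lTensor_surjective M (prodToSupSpan_surjective I x) u
  refine ⟨(LinearMap.fst R I R).lTensor M t, (LinearMap.snd R I R).lTensor M t, ?_⟩
  rw [← LinearMap.lTensor_comp_apply, ← LinearMap.lTensor_comp_apply, ← LinearMap.add_apply,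
    ← LinearMap.lTensor_add]
  rfl

lemma lTensor_subtype_injective_sup_span_singleton {I : Ideal R} {x : R}
    (hI : Function.Injective (I.subtype.lTensor M))
    (hx : IsSMulRegular (M ⧸ (I • ⊤ : Submodule R M)) x) :
    Function.Injective ((I ⊔ Ideal.span {x}).subtype.lTensor M) := by
  refine (injective_iff_map_eq_zero _).mpr fun u hu ↦ ?_
  obtain ⟨v, w, rfl⟩ := exists_eq_lTensor_inclusion_add_lTensor_mulToSupSpan u
  have hmul : (I ⊔ Ideal.span {x}).subtype ∘ₗ mulToSupSpan I x = x • LinearMap.id :=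
    LinearMap.ext fun r ↦ mul_comm r x
  have hrestrict : mulToSupSpan I x ∘ₗ I.subtype = x • Submodule.inclusion le_sup_left :=
    LinearMap.ext fun i ↦ Subtype.ext (mul_comm (i : R) x)
  have hvw : I.subtype.lTensor M v + x • w = 0 := by
    rwa [map_add, ← LinearMap.lTensor_comp_apply, ← LinearMap.lTensor_comp_apply,
      Submodule.subtype_comp_inclusion, hmul, LinearMap.lTensor_smul, LinearMap.smul_apply,
      LinearMap.lTensor_id_apply] at hu
  obtain ⟨z, rfl⟩ := exists_lTensor_subtype_eq_of_isSMulRegular hx hvw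
  have hvz : v + x • z = 0 := hI <| by rw [map_add, map_smul, hvw, map_zero]
  rw [← LinearMap.lTensor_comp_apply, hrestrict, LinearMap.lTensor_smul, LinearMap.smul_apply,
    ← map_smul, ← map_add, hvz, map_zero]

theorem lTensor_ofList_subtype_injective {rs : List R} (hrs : IsWeaklyRegular M rs) :
    Function.Injective ((Ideal.ofList rs).subtype.lTensor M) := by
  induction rs using List.reverseRecOn with
  | nil =>
    rw [Ideal.ofList_nil]
    exact Function.injective_of_subsingleton _
  | append_singleton rs x ih =>
    obtain ⟨hrs, hx⟩ := (isWeaklyRegular_append_iff M rs [x]).mp hrs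
    rw [Ideal.ofList_append, Ideal.ofList_singleton]
    exact lTensor_subtype_injective_sup_span_singleton (ih hrs)
      ((isWeaklyRegular_singleton_iff _ x).mp hx)

end RegularSequence

section Dimension

variable {R : Type*} [CommRing R] {M : Type*} [AddCommGroup M] [Module R M]

lemma supportDim_le_of_support_subset {N : Type*} [AddCommGroup N] [Module R N]
    (h : support R M ⊆ support R N) : supportDim R M ≤ supportDim R N :=
  Order.krullDim_le_of_strictMono (Set.inclusion h) fun _ _ hlt ↦ hlt

variable [Module.Finite R M]

lemma nontrivial_quotSMulTop_of_mem_ringJacobson [Nontrivial M] {x : R}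
    (hx : x ∈ Ring.jacobson R) : Nontrivial (QuotSMulTop x M) :=
  Submodule.Quotient.nontrivial_iff.mpr <| Ne.symm <|
    Submodule.top_ne_pointwise_smul_of_mem_jacobson_annihilator (Ideal.ringJacobson_le_jacobson hx)

lemma ideal_smul_top_lt_top_of_le_ringJacobson [Nontrivial M] {I : Ideal R}
    (hI : I ≤ Ring.jacobson R) : I • (⊤ : Submodule R M) < ⊤ :=
  (Submodule.top_ne_ideal_smul_of_le_jacobson_annihilator
    (hI.trans Ideal.ringJacobson_le_jacobson)).symm.lt_top

variable [IsNoetherianRing R]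

lemma supportDim_le_supportDim_quotient_ofList_add_length {xs : List R}
    (hxs : ∀ x ∈ xs, x ∈ Ring.jacobson R) :
    supportDim R M ≤ supportDim R (M ⧸ (Ideal.ofList xs • ⊤ : Submodule R M)) + xs.length := by
  induction xs generalizing M with
  | nil =>
    rw [Ideal.ofList_nil, Submodule.bot_smul,
      supportDim_eq_of_equiv (Submodule.quotEquivOfEqBot ⊥ rfl), List.length_nil, Nat.cast_zero,
      add_zero]
  | cons x xs ih =>
    rw [List.forall_mem_cons] at hxs
    calc supportDim R M
      _ ≤ supportDim R (QuotSMulTop x M) + 1 :=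
        supportDim_le_supportDim_quotSMulTop_succ_of_mem_jacobson
          (Ideal.ringJacobson_le_jacobson hxs.1)
      _ ≤ supportDim R (QuotSMulTop x M ⧸ (Ideal.ofList xs • ⊤ : Submodule R _)) +
          xs.length + 1 := by
        gcongr
        exact ih hxs.2
      _ = _ := by
        rw [← supportDim_eq_of_equiv (Submodule.quotOfListConsSMulTopEquivQuotSMulTopInner M x xs),
          List.length_cons, Nat.cast_succ, add_assoc]

lemma range_quotSMulTop_map_torsionBySet_subtype_ne_bot {s : Set R} {y : R}
    (hs : Submodule.torsionBySet R M s ≠ ⊥) (hy : IsSMulRegular M y) (hyJ : y ∈ Ring.jacobson R) :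
    LinearMap.range (QuotSMulTop.map y (Submodule.torsionBySet R M s).subtype) ≠ ⊥ := by
  set T := Submodule.torsionBySet R M s with hT
  contrapose! hs
  have hle : T ≤ y • T := fun t ht ↦ by
    have hzero : Submodule.Quotient.mk t = (0 : QuotSMulTop y M) :=
      DFunLike.congr_fun (LinearMap.range_eq_bot.mp hs)
        (Submodule.Quotient.mk ⟨t, ht⟩ : QuotSMulTop y T)
    obtain ⟨m, -, rfl⟩ := (Submodule.Quotient.mk_eq_zero _).mp hzero
    refine Submodule.smul_mem_pointwise_smul m y T ?_
    rw [hT, Submodule.mem_torsionBySet_iff] at ht ⊢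
    exact fun a ↦ hy.right_eq_zero_of_smul ((smul_comm y (a : R) m).trans (ht a))
  exact Submodule.eq_bot_of_eq_pointwise_smul_of_mem_jacobson_annihilator
    (IsNoetherian.noetherian T) (hle.antisymm (Submodule.smul_le_self_of_tower y T))
    (Ideal.ringJacobson_le_jacobson hyJ)

lemma supportDim_torsionBySet_annihilator_le (N : Submodule R M) :
    supportDim R (Submodule.torsionBySet R M (annihilator R N)) ≤ supportDim R N := by
  refine supportDim_le_of_support_subset ?_
  rw [support_eq_zeroLocus, support_eq_zeroLocus]
  exact PrimeSpectrum.zeroLocus_anti_mono fun a ha ↦ mem_annihilator.mpr fun t ↦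
    Submodule.torsionBySet_isTorsionBySet (annihilator R N : Set R) (a := ⟨a, ha⟩)

lemma length_le_supportDim_submodule_of_isWeaklyRegular {rs : List R}
    (hJ : ∀ r ∈ rs, r ∈ Ring.jacobson R) (hrs : IsWeaklyRegular M rs) {N : Submodule R M}
    (hN : N ≠ ⊥) : rs.length ≤ supportDim R N := by
  induction rs generalizing M with
  | nil =>
    have : Nontrivial N := Submodule.nontrivial_iff_ne_bot.mpr hN
    rw [List.length_nil, Nat.cast_zero]
    exact Order.krullDim_nonneg_iff.mpr (nonempty_support_of_nontrivial).to_subtype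
  | cons y rs ih =>
    rw [List.forall_mem_cons] at hJ
    obtain ⟨hy, hrs⟩ := (isWeaklyRegular_cons_iff M y rs).mp hrs
    let T := Submodule.torsionBySet R M (annihilator R N)
    have hNT : N ≤ T := fun n hn ↦ (Submodule.mem_torsionBySet_iff _ _).mpr fun a ↦
      congrArg Subtype.val (mem_annihilator.mp a.2 ⟨n, hn⟩)
    let f := QuotSMulTop.map y T.subtype
    have hf := range_quotSMulTop_map_torsionBySet_subtype_ne_bot
      (ne_bot_of_le_ne_bot hN hNT) hy hJ.1
    calc ((y :: rs).length : WithBot ℕ∞)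
      _ = rs.length + 1 := by rw [List.length_cons, Nat.cast_succ]
      _ ≤ supportDim R (LinearMap.range f) + 1 := by
        gcongr
        exact ih hJ.2 hrs hf
      _ ≤ supportDim R (QuotSMulTop y T) + 1 := by
        gcongr
        exact supportDim_le_of_surjective f.rangeRestrict f.surjective_rangeRestrict
      _ = supportDim R T := supportDim_quotSMulTop_succ_eq_supportDim_mem_jacobson
        (hy.submodule T y) (Ideal.ringJacobson_le_jacobson hJ.1)
      _ ≤ supportDim R N := supportDim_torsionBySet_annihilator_le N

lemma isSMulRegular_of_supportDim_quotSMulTop_lt_length {rs : List R}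
    (hJ : ∀ r ∈ rs, r ∈ Ring.jacobson R) (hrs : IsWeaklyRegular M rs) {x : R}
    (hx : supportDim R (QuotSMulTop x M) < rs.length) : IsSMulRegular M x := by
  by_contra hreg
  have hdim := length_le_supportDim_submodule_of_isWeaklyRegular hJ hrs
    (mt (isSMulRegular_iff_torsionBy_eq_bot M x).mpr hreg)
  refine (hx.trans_le hdim).not_ge (supportDim_le_of_support_subset ?_)
  rw [support_quotSMulTop, Set.subset_inter_iff]
  refine ⟨support_subset_of_injective _ (Submodule.subtype_injective _), fun p hp ↦ ?_⟩
  have hann : x ∈ annihilator R (Submodule.torsionBy R M x) :=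
    mem_annihilator.mpr (Submodule.smul_torsionBy x)
  simpa using annihilator_le_of_mem_support hp hann

end Dimension

/-- `I` contains an `M`-regular sequence of length `n`, that is, `depth_I M ≥ n`. -/
def HasRegularSequence {R : Type*} [CommRing R] (I : Ideal R) (M : Type*) [AddCommGroup M]
    [Module R M] (n : ℕ) : Prop :=
  ∃ rs : List R, rs.length = n ∧ (∀ r ∈ rs, r ∈ I) ∧ IsRegular M rs

section Rees

variable {R : Type u} [CommRing R] [IsNoetherianRing R] [Small.{v} R] {M : Type v}
  [AddCommGroup M] [Module R M] [Module.Finite R M]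

lemma hasRegularSequence_iff_subsingleton_ext [Nontrivial M] {I : Ideal R}
    (hI : I ≤ Ring.jacobson R) {n : ℕ} :
    HasRegularSequence I M n ↔ ∀ i < n,
      Subsingleton (Ext (ModuleCat.of R (Shrink.{v} (R ⧸ I))) (ModuleCat.of R M) i) :=
  (ModuleCat.exists_isRegular_tfae I n (ModuleCat.of R M)
    (ideal_smul_top_lt_top_of_le_ringJacobson hI)).out 3 1

lemma HasRegularSequence.quotSMulTop {I : Ideal R} (hI : I ≤ Ring.jacobson R) {n : ℕ}
    (h : HasRegularSequence I M (n + 1)) {x : R} (hxI : x ∈ I) (hx : IsSMulRegular M x) :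
    HasRegularSequence I (QuotSMulTop x M) n := by
  have : Nontrivial M := h.elim fun _ hrs ↦ hrs.2.2.nontrivial
  have : Nontrivial (QuotSMulTop x M) := nontrivial_quotSMulTop_of_mem_ringJacobson (hI hxI)
  rw [hasRegularSequence_iff_subsingleton_ext hI] at h ⊢
  intro i hi
  have hx' : IsSMulRegular (ModuleCat.of R M) x := hx
  have hexact := Ext.covariant_sequence_exact₃' (ModuleCat.of R (Shrink.{v} (R ⧸ I)))
    hx'.smulShortComplex_shortExact i (i + 1) rfl
  have hzero (j : ℕ) (hj : j < n + 1) := AddCommGrpCat.isZero_of_iff_subsingleton.mpr (h j hj)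
  exact AddCommGrpCat.subsingleton_of_isZero <| hexact.isZero_of_both_zeros
    ((hzero i (by lia)).eq_zero_of_src _) ((hzero (i + 1) (by lia)).eq_zero_of_tgt _)

theorem isWeaklyRegular_of_supportDim_quotient_add_length_le {n : ℕ}
    (hM : HasRegularSequence (Ring.jacobson R) M n) {xs : List R}
    (hxs : ∀ x ∈ xs, x ∈ Ring.jacobson R)
    (hdim : supportDim R (M ⧸ (Ideal.ofList xs • ⊤ : Submodule R M)) + xs.length ≤ n) :
    IsWeaklyRegular M xs := by
  induction xs generalizing M n with
  | nil => exact .nil R M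
  | cons x xs ih =>
    obtain ⟨hx, hxs⟩ := List.forall_mem_cons.mp hxs
    have ⟨rs, hlength, hrsJ, hrs⟩ := hM
    have := hrs.nontrivial
    have := nontrivial_quotSMulTop_of_mem_ringJacobson (M := M) hx
    rw [supportDim_eq_of_equiv (Submodule.quotOfListConsSMulTopEquivQuotSMulTopInner M x xs),
      List.length_cons, Nat.cast_succ, ← add_assoc] at hdim
    have hle : supportDim R (QuotSMulTop x M) + 1 ≤ n := le_trans
      (by gcongr; exact supportDim_le_supportDim_quotient_ofList_add_length hxs) hdim
    have hreg : IsSMulRegular M x := isSMulRegular_of_supportDim_quotSMulTop_lt_length hrsJ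
      hrs.toIsWeaklyRegular (hlength ▸ ENat.WithBot.add_one_le_natCast_iff.mp hle)
    cases n with
    | zero =>
      exact absurd ((ENat.WithBot.add_one_le_zero_iff _).mp hle)
        (supportDim_ne_bot_of_nontrivial _ _)
    | succ n =>
      exact (isWeaklyRegular_cons_iff M x xs).mpr ⟨hreg, ih (hM.quotSMulTop le_rfl hx hreg) hxs
        (ENat.WithBot.add_le_add_one_right_iff.mp hdim)⟩

end Rees

section MiracleFlatness

lemma IsRegularLocalRing'.exists_list {R : Type*} [CommRing R] [IsLocalRing R]
    (hR : IsRegularLocalRing' R) :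
    ∃ xs : List R, Ideal.ofList xs = maximalIdeal R ∧
      (xs.length : WithBot ℕ∞) = ringKrullDim R := by
  obtain ⟨-, s, hs, hcard⟩ := hR
  refine ⟨s.toList, by simp [Ideal.ofList, ← hs], ?_⟩
  rw [Finset.length_toList]
  exact hcard

/-- The `S`-module `M` is Cohen–Macaulay: the maximal ideal of `S` contains an `M`-regular sequence
of length `dim Supp M`. The zero module is excluded, regular sequences being proper. -/
def IsCohenMacaulayModule (S : Type*) [CommRing S] [IsLocalRing S] (M : Type*) [AddCommGroup M]
    [Module S M] : Prop :=
  ∃ n : ℕ, HasRegularSequence (maximalIdeal S) M n ∧ (n : WithBot ℕ∞) = supportDim S M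

lemma IsCohenMacaulayLocalRing'.isCohenMacaulayModule {S : Type*} [CommRing S] [IsLocalRing S]
    (hS : IsCohenMacaulayLocalRing' S) : IsCohenMacaulayModule S S := by
  obtain ⟨-, rs, hrs_mem, hrs, hlength⟩ := hS
  exact ⟨rs.length, ⟨rs, rfl, hrs_mem, hrs⟩,
    hlength.trans (supportDim_self_eq_ringKrullDim S).symm⟩

theorem IsCohenMacaulayModule.isWeaklyRegular {S : Type u} [CommRing S] [IsLocalRing S]
    [IsNoetherianRing S] [Small.{v} S] {M : Type v} [AddCommGroup M] [Module S M]
    [Module.Finite S M] (hM : IsCohenMacaulayModule S M) {xs : List S}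
    (hxs : ∀ x ∈ xs, x ∈ maximalIdeal S)
    (hdim : supportDim S (M ⧸ (Ideal.ofList xs • ⊤ : Submodule S M)) + xs.length ≤
      supportDim S M) : IsWeaklyRegular M xs := by
  obtain ⟨n, hreg, hn⟩ := hM
  rw [← ringJacobson_eq_maximalIdeal] at hreg hxs
  exact isWeaklyRegular_of_supportDim_quotient_add_length_le hreg hxs (hn ▸ hdim)

theorem stmt_13_general {R : Type*} {S : Type u} {M : Type v} [CommRing R] [CommRing S]
    [IsLocalRing R] [IsLocalRing S] [IsNoetherianRing S] [Small.{v} S] [Algebra R S]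
    [IsLocalHom (algebraMap R S)] [AddCommGroup M] [Module R M] [Module S M] [IsScalarTower R S M]
    [Module.Finite S M] (hR : IsRegularLocalRing' R) (hM : IsCohenMacaulayModule S M)
    (hdim : supportDim S M = ringKrullDim R +
      supportDim S (M ⧸ ((maximalIdeal R).map (algebraMap R S) • ⊤ : Submodule S M))) :
    Module.Flat R M := by
  obtain ⟨xs, hxs, hlength⟩ := hR.exists_list
  have := hR.1
  have hmap : Ideal.ofList (xs.map (algebraMap R S)) = (maximalIdeal R).map (algebraMap R S) := by
    rw [← Ideal.map_ofList, hxs]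
  have hm : (maximalIdeal R).map (algebraMap R S) ≤ maximalIdeal S :=
    ((local_hom_TFAE (algebraMap R S)).out 0 2).mp ‹_›
  have hregS : IsWeaklyRegular M (xs.map (algebraMap R S)) :=
    hM.isWeaklyRegular (fun x hx ↦ hm (hmap ▸ Ideal.subset_span hx)) <| by
      rw [hmap, List.length_map, hlength, hdim, add_comm]
  have hregR : IsWeaklyRegular M xs := (isWeaklyRegular_map_algebraMap_iff S M xs).mp hregS
  exact flat_of_lTensor_maximal_subtype_injective (hm.trans (ringJacobson_eq_maximalIdeal S).ge)
    (hxs ▸ lTensor_ofList_subtype_injective hregR)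

end MiracleFlatness

/-- Miracle Flatness: a local homomorphism from a regular noetherian local ring to a
Cohen–Macaulay noetherian local ring with `dim S = dim R + dim (S / m_R S)` is flat. -/
theorem stmt_13 {R S : Type*} [CommRing R] [CommRing S] [IsLocalRing R] [IsLocalRing S]
    [Algebra R S] [IsLocalHom (algebraMap R S)]
    (hR : IsRegularLocalRing' R) (hS : IsCohenMacaulayLocalRing' S)
    (hdim : ringKrullDim S =
      ringKrullDim R +
        ringKrullDim (S ⧸ Ideal.map (algebraMap R S) (IsLocalRing.maximalIdeal R))) :
    Module.Flat R S := by
  have := hS.1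
  refine stmt_13_general (S := S) hR hS.isCohenMacaulayModule ?_
  rwa [supportDim_self_eq_ringKrullDim, smul_eq_mul, Ideal.mul_top,
    supportDim_quotient_eq_ringKrullDim]
end

section
/- Let A be a henselian local ring with residue field k, and let B be a smooth A-algebra. Then every k-algebra homomorphism B ⊗_A k → k lifts to an A-algebra homomorphism B → A. Equivalently, a smooth A-scheme with a k-rational point on its special fiber admits an A-point specializing to it. -/
open scoped TensorProduct

universe u

/-!
A standard étale algebra `R[X]/(f)` localised at `g` represents the roots of `f` at which `g` is
invertible, and such a root is automatically simple; over a henselian pair `(A, I)` it therefore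
lifts from `A ⧸ I` to `A`. Around any prime, a smooth algebra becomes standard étale over a
polynomial ring after inverting one element, and a point with values in a local ring `A ⧸ I` factors
through such a localisation. Its coordinates in the polynomial ring lift arbitrarily to `A`, and any
choice of lifts makes `A` an algebra over the polynomial ring, which reduces to the standard étale
case.
-/

section HenselianPair

open Polynomial

variable {R S A C : Type*} [CommRing R] [CommRing S] [CommRing A] [CommRing C]
  [Algebra R S] [Algebra R A] [Algebra R C] {I : Ideal A} [HenselianRing A I]

theorem exists_aeval_eq_zero_and_mk_eq {f : R[X]} (hf : f.Monic) {y : A ⧸ I}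
    (hy : aeval y f = 0) (hy' : IsUnit (aeval y (derivative f))) :
    ∃ a : A, aeval a f = 0 ∧ Ideal.Quotient.mk I a = y := by
  obtain ⟨a₀, rfl⟩ := Ideal.Quotient.mk_surjective y
  have mk_eval (q : R[X]) : Ideal.Quotient.mk I ((q.map (algebraMap R A)).eval a₀) =
      aeval (Ideal.Quotient.mk I a₀) q := by
    rw [eval_map_algebraMap]
    exact (aeval_algHom_apply (Ideal.Quotient.mkₐ R I) a₀ q).symm
  obtain ⟨a, ha, haI⟩ := HenselianRing.is_henselian (I := I) (f.map (algebraMap R A))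
    (hf.map _) a₀ (Ideal.Quotient.eq_zero_iff_mem.mp ((mk_eval f).trans hy))
    (by rwa [derivative_map, mk_eval])
  exact ⟨a, by rwa [IsRoot, eval_map_algebraMap] at ha, Ideal.Quotient.eq.mpr haI⟩

theorem exists_hasMap_and_mk_eq (P : StandardEtalePair R) {y : A ⧸ I} (hy : P.HasMap y) :
    ∃ a : A, P.HasMap a ∧ Ideal.Quotient.mk I a = y := by
  obtain ⟨a, ha, rfl⟩ := exists_aeval_eq_zero_and_mk_eq P.monic_f hy.1 hy.isUnit_derivative_f
  have := isLocalHom_of_le_jacobson_bot I HenselianRing.jac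
  have hg : IsUnit (Ideal.Quotient.mk I (aeval a P.g)) := by
    rw [← Ideal.Quotient.mkₐ_eq_mk R, ← aeval_algHom_apply]
    exact hy.2
  exact ⟨a, ⟨ha, hg.of_map⟩, rfl⟩

theorem exists_mkₐ_comp_eq_of_isStandardEtale [Algebra.IsStandardEtale R C]
    (θ : C →ₐ[R] A ⧸ I) : ∃ ψ : C →ₐ[R] A, (Ideal.Quotient.mkₐ R I).comp ψ = θ := by
  obtain ⟨P⟩ := Algebra.IsStandardEtale.nonempty_standardEtalePresentation (R := R) (S := C)
  obtain ⟨a, ha, hax⟩ := exists_hasMap_and_mk_eq P.P (P.hasMap.map θ)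
  refine ⟨(P.lift a ha).comp P.equivRing.toAlgHom, P.hom_ext ?_⟩
  simp [hax]

theorem exists_mkₐ_comp_eq_of_isStandardEtale_tower [Algebra S C] [IsScalarTower R S C]
    [Algebra.IsStandardEtale S C] (θ : C →ₐ[R] A ⧸ I) (χ : S →ₐ[R] A)
    (hχ : (Ideal.Quotient.mkₐ R I).comp χ = θ.comp (IsScalarTower.toAlgHom R S C)) :
    ∃ ψ : C →ₐ[R] A, (Ideal.Quotient.mkₐ R I).comp ψ = θ := by
  let _ : Algebra S A := χ.toAlgebra
  have : IsScalarTower R S A := .of_algebraMap_eq fun r => (χ.commutes r).symm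
  let θ' : C →ₐ[S] A ⧸ I := { θ with commutes' := fun s => congr($hχ.symm s) }
  obtain ⟨ψ, hψ⟩ := exists_mkₐ_comp_eq_of_isStandardEtale θ'
  exact ⟨ψ.restrictScalars R, AlgHom.ext fun c => congr($hψ c)⟩

end HenselianPair

theorem exists_mvPolynomial_algHom_comp_eq {R A A' σ : Type*} [CommSemiring R] [CommSemiring A]
    [CommSemiring A'] [Algebra R A] [Algebra R A'] {π : A →ₐ[R] A'} (hπ : Function.Surjective π)
    (θ : MvPolynomial σ R →ₐ[R] A') : ∃ χ : MvPolynomial σ R →ₐ[R] A, π.comp χ = θ := by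
  choose x hx using fun i => hπ (θ (MvPolynomial.X i))
  exact ⟨MvPolynomial.aeval x, MvPolynomial.algHom_ext fun i => by simp [hx]⟩

theorem stmt_15_general {R A B : Type*} [CommRing R] [CommRing A] [CommRing B] [Algebra R A]
    [Algebra R B] [Algebra.FinitePresentation R B] {I : Ideal A} [HenselianRing A I]
    [IsLocalRing (A ⧸ I)] (φ : B →ₐ[R] A ⧸ I)
    [Algebra.IsSmoothAt R ((IsLocalRing.maximalIdeal (A ⧸ I)).comap φ)] :
    ∃ ψ : B →ₐ[R] A, (Ideal.Quotient.mkₐ R I).comp ψ = φ := by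
  obtain ⟨f, hf, n, _, _, _⟩ := Algebra.IsSmoothAt.exists_isStandardEtale_mvPolynomial
    (R := R) (p := (IsLocalRing.maximalIdeal (A ⧸ I)).comap φ)
  have hφf : IsUnit (φ f) := IsLocalRing.notMem_maximalIdeal.mp hf
  let θ : Localization.Away f →ₐ[R] A ⧸ I := IsLocalization.Away.liftAlgHom f hφf
  obtain ⟨χ, hχ⟩ := exists_mvPolynomial_algHom_comp_eq (Ideal.Quotient.mkₐ_surjective R I)
    (θ.comp (IsScalarTower.toAlgHom R (MvPolynomial (Fin n) R) (Localization.Away f)))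
  obtain ⟨ψ, hψ⟩ := exists_mkₐ_comp_eq_of_isStandardEtale_tower θ χ hχ
  refine ⟨ψ.comp (IsScalarTower.toAlgHom R B (Localization.Away f)), AlgHom.ext fun b => ?_⟩
  calc Ideal.Quotient.mk I (ψ (algebraMap B (Localization.Away f) b))
      = θ (algebraMap B (Localization.Away f) b) := congr($hψ _)
    _ = φ b := IsLocalization.Away.lift_eq f hφf b

/-- Over a henselian local ring `A` with residue field `k`, any `k`-point of the special
fiber of a smooth `A`-algebra `B` lifts to an `A`-point: every `k`-algebra homomorphism
`B ⊗_A k → k` lifts to an `A`-algebra homomorphism `B → A`. -/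
theorem stmt_15 {A B : Type u} [CommRing A] [HenselianLocalRing A]
    [CommRing B] [Algebra A B] [Algebra.Smooth A B]
    (φ : (IsLocalRing.ResidueField A ⊗[A] B) →ₐ[IsLocalRing.ResidueField A]
      IsLocalRing.ResidueField A) :
    ∃ ψ : B →ₐ[A] A, ∀ b : B, IsLocalRing.residue A (ψ b) = φ (1 ⊗ₜ b) := by
  have : IsLocalRing (A ⧸ IsLocalRing.maximalIdeal A) :=
    inferInstanceAs (IsLocalRing (IsLocalRing.ResidueField A))
  obtain ⟨ψ, hψ⟩ := stmt_15_general (I := IsLocalRing.maximalIdeal A)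
    ((φ.restrictScalars A).comp Algebra.TensorProduct.includeRight)
  exact ⟨ψ, fun b => congr($hψ b)⟩
end
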